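/- For all integers α ≥ 3 and β ≥ 1, the PSD-throttling number of the balanced spider satisfies th₊(T_{α,β}) = ⌈t_S(α,β)⌉. -/

import Mathlib

open SimpleGraph

/-- `v` PSD-forces `w` given blue set `B`: `v` is blue, adjacent to the white vertex `w`,
and `w` is the only white neighbor of `v` in the component of `G - B` containing `w`. -/
def psdForces {V : Type*} (G : SimpleGraph V) (B : Set V) (v w : V) : Prop :=
  v ∈ B ∧ G.Adj v w ∧ ∃ hw : w ∉ B,
    ∀ (u : V) (hu : u ∉ B), G.Adj v u →
      (G.induce {x | x ∉ B}).Reachable ⟨u, hu⟩ ⟨w, hw⟩ → u = w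

/-- One time-step of PSD forcing: all forceable white vertices become blue simultaneously. -/
def psdStep {V : Type*} (G : SimpleGraph V) (B : Set V) : Set V :=
  B ∪ {w | ∃ v, psdForces G B v w}

/-- `B` is a PSD-forcing set of `G` if iterating the PSD color change rule colors all of `V`. -/
def IsPSDForcing {V : Type*} (G : SimpleGraph V) (B : Set V) : Prop :=
  ∃ t, (psdStep G)^[t] B = Set.univ

/-- The PSD-propagation time of `B` in `G`. -/
noncomputable def psdPt {V : Type*} (G : SimpleGraph V) (B : Set V) : ℕ :=
  sInf {t | (psdStep G)^[t] B = Set.univ}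

/-- The PSD-throttling number of `G`. -/
noncomputable def psdTh {V : Type*} (G : SimpleGraph V) : ℕ :=
  sInf {k | ∃ B : Finset V, IsPSDForcing G ↑B ∧ k = B.card + psdPt G ↑B}

/-- The weighted PSD-throttling number of `(G, w)`. -/
noncomputable def psdThW {V : Type*} (G : SimpleGraph V) (w : V → ℕ) : ℕ :=
  sInf {k | ∃ B : Finset V, IsPSDForcing G ↑B ∧ k = (∑ x ∈ B, w x) + psdPt G ↑B}

/-- The spider `S(l₀, …, l_{k-1})`: a center vertex `none` adjacent to the first vertex
of each of `k` disjoint paths, the `i`-th of order `l i`. -/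
def spider (k : ℕ) (l : Fin k → ℕ) : SimpleGraph (Option ((i : Fin k) × Fin (l i))) :=
  SimpleGraph.fromRel (fun x y =>
    (∃ (i : Fin k) (j : Fin (l i)), (j : ℕ) = 0 ∧ x = none ∧ y = some ⟨i, j⟩) ∨
    (∃ (i : Fin k) (j j' : Fin (l i)), (j' : ℕ) = (j : ℕ) + 1 ∧
      x = some ⟨i, j⟩ ∧ y = some ⟨i, j'⟩))

/-- The balanced spider `T_{α,β}` with `α` legs each of order `β`. -/
abbrev balancedSpider (α β : ℕ) : SimpleGraph (Option ((_ : Fin α) × Fin β)) :=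
  spider α (fun _ => β)


/-- `ŝ(α,β) = ⌊√((2β + α + 1)/(4α))⌋`. -/
noncomputable def sHat (α : ℤ) (β : ℝ) : ℤ :=
  ⌊Real.sqrt ((2 * β + (α : ℝ) + 1) / (4 * (α : ℝ)))⌋

/-- `t_S(α,β) = 1 + α·ŝ(α,β) + (β + 1/2)/(2ŝ(α,β) + 1) - 1/2`, the continuous variant of the
PSD-throttling number of the balanced spider `T_{α,β}`. -/
noncomputable def tS (α : ℤ) (β : ℝ) : ℝ :=
  1 + (α : ℝ) * (sHat α β : ℝ) + (β + 1 / 2) / (2 * (sHat α β : ℝ) + 1) - 1 / 2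

namespace SpiderAux

abbrev SV (α β : ℕ) := Option ((_ : Fin α) × Fin β)

/-- distance to the center -/
def pos {α β : ℕ} : SV α β → ℕ
  | none => 0
  | some x => (x.2 : ℕ) + 1

/-- the leg of a vertex (`none` for the center) -/
def leg {α β : ℕ} : SV α β → Option (Fin α)
  | none => none
  | some x => some x.1

lemma pos_n {α β : ℕ} : pos (none : SV α β) = 0 := by
  by_contra h
  exact h rfl
lemma pos_s {α β : ℕ} (x) : pos (some x : SV α β) = (x.2 : ℕ) + 1 := by
  by_contra h
  exact h rfl
lemma leg_n {α β : ℕ} : leg (none : SV α β) = none := by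
  by_contra h
  exact h rfl
lemma leg_s {α β : ℕ} (x) : leg (some x : SV α β) = some x.1 := by
  by_contra h
  exact h rfl

/-- explicit distance in the spider -/
def D {α β : ℕ} (x y : SV α β) : ℕ :=
  if leg x = leg y then (pos x - pos y) + (pos y - pos x) else pos x + pos y

lemma adj_iff {α β : ℕ} (x y : SV α β) : (balancedSpider α β).Adj x y ↔
    (pos y = pos x + 1 ∧ (x = none ∨ leg x = leg y)) ∨
    (pos x = pos y + 1 ∧ (y = none ∨ leg x = leg y)) := by
  rcases x with _ | ⟨i, j⟩ <;> rcases y with _ | ⟨i', j'⟩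
  · simp [balancedSpider, spider, pos]
  · simp only [balancedSpider, spider, pos, leg, SimpleGraph.fromRel_adj]
    simp only [reduceCtorEq, Option.some.injEq, Sigma.mk.injEq, heq_eq_eq]
    constructor
    · rintro ⟨-, (⟨a, b, h, -, rfl, rfl⟩ | ⟨a, b, c, h, h', -⟩) | h⟩
      · left; simp [h]
      · simp at h'
      · simp at h
    · rintro (⟨h, -⟩ | ⟨h, -⟩)
      · exact ⟨by simp, Or.inl (Or.inl ⟨i', j', by simpa using h, by simp⟩)⟩
      · simp at h
  · simp only [balancedSpider, spider, pos, leg, SimpleGraph.fromRel_adj]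
    simp only [reduceCtorEq, Option.some.injEq, Sigma.mk.injEq, heq_eq_eq]
    constructor
    · rintro ⟨-, h | (⟨a, b, h, -, rfl, rfl⟩ | ⟨a, b, c, h, h', -⟩)⟩
      · simp at h
      · right; simp [h]
      · simp at h'
    · rintro (⟨h, -⟩ | ⟨h, -⟩)
      · simp at h
      · exact ⟨by simp, Or.inr (Or.inl ⟨i, j, by simpa using h, by simp⟩)⟩
  · simp only [balancedSpider, spider, pos, leg, SimpleGraph.fromRel_adj]
    simp only [reduceCtorEq, Option.some.injEq, Sigma.mk.injEq, heq_eq_eq, ne_eq]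
    constructor
    · rintro ⟨-, (⟨a, b, h, h', -⟩ | ⟨a, b, c, h, ⟨rfl, rfl⟩, rfl, rfl⟩) |
        (⟨a, b, h, h', -⟩ | ⟨a, b, c, h, ⟨rfl, rfl⟩, rfl, rfl⟩)⟩
      · simp at h'
      · left; simp [h]
      · simp at h'
      · right; simp [h]
    · rintro (⟨h, h' | rfl⟩ | ⟨h, h' | rfl⟩)
      · simp at h'
      · refine ⟨?_, Or.inl (Or.inr ⟨i, j, j', by omega, by simp⟩)⟩
        rintro ⟨-, rfl⟩; omega
      · simp at h'
      · refine ⟨?_, Or.inr (Or.inr ⟨i, j', j, by omega, by simp⟩)⟩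
        rintro ⟨-, rfl⟩; omega

lemma eq_of {α β : ℕ} {x y : SV α β} (hl : leg x = leg y) (hp : pos x = pos y) : x = y := by
  rcases x with _ | ⟨i, j⟩ <;> rcases y with _ | ⟨i', j'⟩ <;> simp_all [leg, pos, Fin.ext_iff]

lemma pos_none {α β : ℕ} : pos (none : SV α β) = 0 := rfl

lemma eq_none_iff {α β : ℕ} {x : SV α β} : x = none ↔ pos x = 0 := by
  rcases x with _ | ⟨i, j⟩ <;> simp [pos]

lemma leg_none_iff {α β : ℕ} {x : SV α β} : leg x = none ↔ pos x = 0 := by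
  rcases x with _ | ⟨i, j⟩ <;> simp [pos, leg]

lemma pos_le {α β : ℕ} (x : SV α β) : pos x ≤ β := by
  rcases x with _ | ⟨i, j⟩
  · simp [pos]
  · simp only [pos]; omega

lemma D_adj {α β : ℕ} {b v w : SV α β} (h : (balancedSpider α β).Adj v w) :
    D b w ≤ D b v + 1 := by
  have h1 := @leg_none_iff _ _ b
  have h2 := @leg_none_iff _ _ v
  have h3 := @leg_none_iff _ _ w
  rw [adj_iff] at h
  simp only [eq_none_iff] at h
  unfold D
  split_ifs <;> grind

lemma D_self {α β : ℕ} (b : SV α β) : D b b = 0 := by simp [D]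

lemma D_eq_zero {α β : ℕ} {b v : SV α β} (h : D b v = 0) : b = v := by
  have h1 := @leg_none_iff _ _ b
  have h2 := @leg_none_iff _ _ v
  unfold D at h
  split_ifs at h with hl
  · exact eq_of hl (by omega)
  · exact absurd (by rw [h1.2 (by omega), h2.2 (by omega)]) hl

lemma exists_pred {α β : ℕ} {b v : SV α β} {t : ℕ} (h : D b v = t + 1) :
    ∃ u, (balancedSpider α β).Adj u v ∧ D b u = t := by
  rcases v with _ | ⟨i, k⟩
  · rcases b with _ | ⟨i', j⟩
    · simp [D] at h
    · refine ⟨some ⟨i', ⟨0, by have := j.2; omega⟩⟩, ?_, ?_⟩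
      · rw [adj_iff]; right; simp [pos]
      · simp [D, pos, leg] at h ⊢; omega
  · by_cases hb : leg b = some i ∧ (k : ℕ) + 1 < pos b
    · have := pos_le b
      refine ⟨some ⟨i, ⟨k + 1, by omega⟩⟩, ?_, ?_⟩
      · rw [adj_iff]; right; simp [pos, leg]
      · simp only [D, pos_n, pos_s, leg_n, leg_s, hb.1, if_true] at h ⊢
        omega
    · by_cases hk : (k : ℕ) = 0
      · refine ⟨none, ?_, ?_⟩
        · rw [adj_iff]; left; simp [pos, hk]
        · have h1 := @leg_none_iff _ _ b
          simp only [D, pos_n, pos_s, leg_n, leg_s] at h ⊢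
          split_ifs at h ⊢ <;> grind
      · refine ⟨some ⟨i, ⟨k - 1, by omega⟩⟩, ?_, ?_⟩
        · rw [adj_iff]; left; simp [pos, leg]; omega
        · simp only [D, pos_n, pos_s, leg_n, leg_s] at h ⊢
          split_ifs at h ⊢ <;> grind

/-- side of `x` relative to `v` -/
def side {α β : ℕ} (v x : SV α β) : Option (Fin α) × Prop :=
  (if v = none then leg x else none, leg x = leg v ∧ pos v < pos x)

lemma side_adj {α β : ℕ} {v x y : SV α β} (hx : x ≠ v) (hy : y ≠ v)
    (h : (balancedSpider α β).Adj x y) : side v x = side v y := by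
  have e1 : leg x = leg v → pos x ≠ pos v := fun a b => hx (eq_of a b)
  have e2 : leg y = leg v → pos y ≠ pos v := fun a b => hy (eq_of a b)
  have h1 := @leg_none_iff _ _ v
  have h2 := @leg_none_iff _ _ x
  have h3 := @leg_none_iff _ _ y
  rw [adj_iff] at h
  simp only [eq_none_iff] at h
  unfold side
  simp only [eq_none_iff]
  refine Prod.ext ?_ (propext ?_)
  · dsimp only
    split_ifs <;> grind
  · dsimp only
    grind

lemma side_inj {α β : ℕ} {v x y : SV α β} 
    (hx : (balancedSpider α β).Adj v x) (hy : (balancedSpider α β).Adj v y)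
    (h : side v x = side v y) : x = y := by
  have h1 := @leg_none_iff _ _ v
  have h2 := @leg_none_iff _ _ x
  have h3 := @leg_none_iff _ _ y
  rw [adj_iff] at hx hy
  simp only [eq_none_iff] at hx hy
  unfold side at h
  simp only [eq_none_iff, Prod.mk.injEq, eq_iff_iff] at h
  have : leg x = leg y ∧ pos x = pos y := by
    obtain ⟨h, h'⟩ := h
    split_ifs at h <;> grind
  exact eq_of this.1 this.2

lemma side_reach {α β : ℕ} {v : SV α β} {B : Set (SV α β)} (hv : v ∈ B)
    (x y : {x | x ∉ B}) (h : ((balancedSpider α β).induce {x | x ∉ B}).Reachable x y) :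
    side v x.1 = side v y.1 := by
  obtain ⟨p⟩ := h
  induction p with
  | nil => rfl
  | cons hadj p ih =>
    rename_i a b c
    rw [← ih]
    refine side_adj ?_ ?_ hadj
    · intro e; exact a.2 (e ▸ hv)
    · intro e; exact b.2 (e ▸ hv)

lemma mem_step {α β : ℕ} {B : Set (SV α β)} {v w : SV α β} (hv : v ∈ B)
    (h : (balancedSpider α β).Adj v w) : w ∈ psdStep (balancedSpider α β) B := by
  by_cases hw : w ∈ B
  · exact Or.inl hw
  · exact Or.inr ⟨v, hv, h, hw, fun u hu hvu hr => side_inj hvu h (side_reach hv _ _ hr)⟩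

lemma iter_iff {α β : ℕ} (B : Set (SV α β)) (t : ℕ) (v : SV α β) :
    v ∈ (psdStep (balancedSpider α β))^[t] B ↔ ∃ b ∈ B, D b v ≤ t := by
  induction t generalizing v with
  | zero =>
    simp only [Function.iterate_zero, id_eq, Nat.le_zero]
    constructor
    · intro h; exact ⟨v, h, D_self v⟩
    · rintro ⟨b, hb, h⟩; exact D_eq_zero h ▸ hb
  | succ t ih =>
    rw [Function.iterate_succ_apply']
    constructor
    · rintro (h | ⟨u, hu, hadj, -⟩)
      · obtain ⟨b, hb, h⟩ := (ih v).1 h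
        exact ⟨b, hb, by omega⟩
      · obtain ⟨b, hb, h⟩ := (ih u).1 hu
        have := D_adj (b := b) hadj
        exact ⟨b, hb, by omega⟩
    · rintro ⟨b, hb, h⟩
      rcases Nat.lt_or_ge t (D b v) with h' | h'
      · obtain ⟨u, hu, hd⟩ := exists_pred (show D b v = t + 1 by omega)
        exact mem_step ((ih u).2 ⟨b, hb, hd.le⟩) hu
      · exact Or.inl ((ih v).2 ⟨b, hb, h'⟩)

lemma iter_univ_iff {α β : ℕ} (B : Set (SV α β)) (t : ℕ) :
    (psdStep (balancedSpider α β))^[t] B = Set.univ ↔ ∀ v, ∃ b ∈ B, D b v ≤ t := by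
  simp only [Set.eq_univ_iff_forall, iter_iff]

/-! Upper bound -/

lemma psdTh_le {V : Type*} (G : SimpleGraph V) (B : Finset V) (h : IsPSDForcing G ↑B) :
    psdTh G ≤ B.card + psdPt G ↑B :=
  Nat.sInf_le ⟨B, h, rfl⟩

lemma upper {α β : ℕ} (s r : ℕ) (h : β ≤ (2 * s + 1) * r + s) :
    psdTh (balancedSpider α β) ≤ 1 + α * s + r := by
  classical
  rcases Nat.eq_zero_or_pos β with rfl | hβ
  · have hc : ∀ v : SV α 0, ∃ b ∈ ((({none} : Finset (SV α 0))) : Set (SV α 0)), D b v ≤ 0 := by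
      intro v
      refine ⟨none, by simp, ?_⟩
      rcases v with _ | ⟨i, j⟩
      · simp [D]
      · exact j.elim0
    have h0 := (iter_univ_iff _ _).2 hc
    have h1 : psdPt (balancedSpider α 0) ((({none} : Finset (SV α 0))) : Set (SV α 0)) ≤ 0 :=
      Nat.sInf_le h0
    refine (psdTh_le _ {none} ⟨0, h0⟩).trans ?_
    rw [Finset.card_singleton]
    omega
  let f : Fin α × Fin s → SV α β := fun p =>
    some ⟨p.1, ⟨min ((2 * r + 1) * (p.2 + 1)) β - 1, by omega⟩⟩
  let B : Finset (SV α β) := insert none (Finset.univ.image f)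
  have hc : ∀ v : SV α β, ∃ b ∈ (B : Set (SV α β)), D b v ≤ r := by
    intro v
    rcases v with _ | ⟨i, k⟩
    · exact ⟨none, by simp [B], by simp [D]⟩
    · by_cases hk : (k : ℕ) + 1 ≤ r
      · exact ⟨none, by simp [B], by simpa [D, leg, pos] using hk⟩
      · have hm : ((k : ℕ) - r) / (2 * r + 1) < s := by
          rw [Nat.div_lt_iff_lt_mul (by omega)]
          have := k.2
          have e : (2 * s + 1) * r + s = s * (2 * r + 1) + r := by ring
          omega
        refine ⟨f (i, ⟨((k : ℕ) - r) / (2 * r + 1), hm⟩), by simp [B], ?_⟩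
        have h1 := Nat.div_add_mod ((k : ℕ) - r) (2 * r + 1)
        have h2 := Nat.mod_lt ((k : ℕ) - r) (show 2 * r + 1 > 0 by omega)
        have h3 := k.2
        simp only [D, f, pos_n, pos_s, leg_n, leg_s, if_true, mul_add, mul_one]
        generalize (2 * r + 1) * (((k : ℕ) - r) / (2 * r + 1)) = q at *
        omega
  have h0 := (iter_univ_iff _ _).2 hc
  have h1 : psdPt (balancedSpider α β) (B : Set (SV α β)) ≤ r := Nat.sInf_le h0
  refine (psdTh_le _ B ⟨r, h0⟩).trans ?_
  have h2 : B.card ≤ (Finset.univ.image f).card + 1 := Finset.card_insert_le _ _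
  have h3 : (Finset.univ.image f).card ≤ α * s := by
    refine Finset.card_image_le.trans ?_
    simp
  omega

/-! Lower bound -/

lemma cover {N : ℕ} {V : Type*} (C : Finset V) (φ : V → ℤ) (a : ℤ) (r : ℕ)
    (h : ∀ x : ℤ, a < x → x ≤ a + N → ∃ b ∈ C, |φ b - x| ≤ r) : N ≤ C.card * (2 * r + 1) := by
  classical
  have hsub : Finset.Ioc a (a + N) ⊆ C.biUnion (fun b => Finset.Icc (φ b - r) (φ b + r)) := by
    intro x hx
    rw [Finset.mem_Ioc] at hx
    obtain ⟨b, hb, hd⟩ := h x hx.1 hx.2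
    rw [abs_le] at hd
    simp only [Finset.mem_biUnion, Finset.mem_Icc]
    exact ⟨b, hb, by omega, by omega⟩
  have := (Finset.card_le_card hsub).trans (Finset.card_biUnion_le_card_mul _ _ (2 * r + 1)
    (fun b _ => by rw [Int.card_Icc]; omega))
  simpa using this

lemma leg_bound {α β : ℕ} (B : Finset (SV α β)) (r : ℕ) (hc : ∀ v, ∃ b ∈ B, D b v ≤ r)
    (i : Fin α) : β ≤ (B.filter (fun b => leg b = some i)).card * (2 * r + 1) + r := by
  have := cover (N := β - r) (B.filter (fun b => leg b = some i)) (fun b => (pos b : ℤ)) r r ?_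
  · omega
  · intro x hx hx'
    obtain ⟨b, hb, hd⟩ := hc (some ⟨i, ⟨x.toNat - 1, by omega⟩⟩)
    simp only [D, pos_n, pos_s, leg_n, leg_s] at hd
    by_cases hl : leg b = some i
    · rw [if_pos hl] at hd
      refine ⟨b, by simp [hb, hl], ?_⟩
      rw [abs_le]; omega
    · rw [if_neg hl] at hd
      omega

lemma two_leg_bound {α β : ℕ} (hα : 2 ≤ α) (B : Finset (SV α β)) (r s : ℕ)
    (hc : ∀ v, ∃ b ∈ B, D b v ≤ r) (hn : none ∉ B)
    (hs : ∀ i, (B.filter (fun b => leg b = some i)).card = s) : β + 1 ≤ s * (2 * r + 1) := by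
  classical
  have hne : B.Nonempty := by
    obtain ⟨b, hb, -⟩ := hc none
    exact ⟨b, hb⟩
  obtain ⟨m, hm, hmin⟩ := B.exists_min_image pos hne
  rcases m with _ | ⟨j, d⟩
  · exact absurd hm hn
  have : Nontrivial (Fin α) := Fin.nontrivial_iff_two_le.2 hα
  obtain ⟨i, hij⟩ := exists_ne j
  let C := B.filter (fun b => leg b = some i) ∪ B.filter (fun b => leg b = some j)
  have hC : C.card ≤ s + s := by
    have := Finset.card_union_le (B.filter (fun b => leg b = some i))
      (B.filter (fun b => leg b = some j))
    rw [hs, hs] at this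
    exact this
  let φ : SV α β → ℤ := fun b => if leg b = some i then -(pos b : ℤ) else pos b
  have hmC : (some ⟨j, d⟩ : SV α β) ∈ C := by
    simp only [C, Finset.mem_union, Finset.mem_filter]
    exact Or.inr ⟨hm, rfl⟩
  have hφm : φ (some ⟨j, d⟩) = (d : ℤ) + 1 := by
    simp only [φ, pos_s, leg_s, Option.some.injEq, hij.symm, if_false]
    push_cast; ring
  have key := cover (N := 2 * β + 1) C φ (-(β : ℤ) - 1) r ?_
  · have h2 := Nat.mul_le_mul_right (2 * r + 1) hC
    rw [add_mul] at h2
    omega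
  · intro x hx hx'
    rcases lt_trichotomy x 0 with h0 | h0 | h0
    · obtain ⟨b, hb, hd⟩ := hc (some ⟨i, ⟨(-x).toNat - 1, by omega⟩⟩)
      have hbm := hmin b hb
      simp only [D, pos_n, pos_s, leg_n, leg_s] at hd hbm
      by_cases hl : leg b = some i
      · rw [if_pos hl] at hd
        refine ⟨b, by simp [C, hb, hl], ?_⟩
        simp only [φ, hl, if_true]
        rw [abs_le]; omega
      · rw [if_neg hl] at hd
        refine ⟨_, hmC, ?_⟩
        rw [hφm, abs_le]; omega
    · obtain ⟨b, hb, hd⟩ := hc none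
      have hbm := hmin b hb
      refine ⟨_, hmC, ?_⟩
      simp only [D, pos_n, pos_s, leg_n, leg_s] at hd hbm
      rw [hφm, abs_le]
      by_cases hl : leg b = none
      · rw [if_pos hl] at hd; omega
      · rw [if_neg hl] at hd; omega
    · obtain ⟨b, hb, hd⟩ := hc (some ⟨j, ⟨x.toNat - 1, by omega⟩⟩)
      have hbm := hmin b hb
      simp only [D, pos_n, pos_s, leg_n, leg_s] at hd hbm
      by_cases hl : leg b = some j
      · rw [if_pos hl] at hd
        refine ⟨b, by simp [C, hb, hl], ?_⟩
        simp only [φ, hl, Option.some.injEq, hij.symm, if_false]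
        rw [abs_le]; omega
      · rw [if_neg hl] at hd
        refine ⟨_, hmC, ?_⟩
        rw [hφm, abs_le]; omega

lemma card_eq {α β : ℕ} (B : Finset (SV α β)) :
    B.card = (if none ∈ B then 1 else 0)
      + ∑ i : Fin α, (B.filter (fun b => leg b = some i)).card := by
  classical
  have h := Finset.card_eq_sum_card_fiberwise (s := B) (t := Finset.univ) (f := leg)
    (fun _ _ => Finset.mem_coe.2 (Finset.mem_univ _))
  rw [Fintype.sum_option] at h
  rw [h]
  congr 1
  by_cases hn : none ∈ B
  · rw [if_pos hn, Finset.card_eq_one]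
    refine ⟨none, ?_⟩
    ext b
    simp only [Finset.mem_filter, Finset.mem_singleton, leg_none_iff, ← eq_none_iff]
    exact ⟨fun h => h.2, fun h => ⟨h ▸ hn, h⟩⟩
  · rw [if_neg hn, Finset.card_eq_zero, Finset.filter_eq_empty_iff]
    intro b hb
    rw [leg_none_iff, ← eq_none_iff]
    exact fun h => hn (h ▸ hb)

lemma lower {α β : ℕ} (hα : 3 ≤ α) (B : Finset (SV α β)) (r : ℕ)
    (hc : ∀ v, ∃ b ∈ B, D b v ≤ r) :
    ∃ s r' : ℕ, β ≤ (2 * s + 1) * r' + s ∧ 1 + α * s + r' ≤ B.card + r := by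
  have : Nonempty (Fin α) := ⟨⟨0, by omega⟩⟩
  obtain ⟨i, -, hi⟩ := Finset.exists_min_image (Finset.univ : Finset (Fin α))
    (fun i => (B.filter (fun b => leg b = some i)).card) Finset.univ_nonempty
  have hb := leg_bound B r hc i
  have hcard := card_eq B
  set n : Fin α → ℕ := fun i => (B.filter (fun b => leg b = some i)).card with hn
  change β ≤ n i * _ + r at hb
  change B.card = _ + ∑ i, n i at hcard
  have hi : ∀ x, n i ≤ n x := fun x => hi x (Finset.mem_univ x)
  have hb' : β ≤ (2 * n i + 1) * r + n i := by nlinarith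
  have hsum : α * n i ≤ ∑ x, n x := by
    simpa using Finset.card_nsmul_le_sum Finset.univ n (n i) (fun x _ => hi x)
  by_cases h0 : none ∈ B
  · rw [if_pos h0] at hcard
    exact ⟨n i, r, hb', by omega⟩
  rw [if_neg h0] at hcard
  by_cases hall : ∀ x, n x = n i
  · have h2 := two_leg_bound (by omega) B r (n i) hc h0 hall
    have hr : 1 ≤ r := by
      obtain ⟨b, hbB, hd⟩ := hc none
      rcases Nat.eq_zero_or_pos r with rfl | h
      · exact absurd (D_eq_zero (Nat.le_zero.1 hd) ▸ hbB) h0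
      · exact h
    generalize n i = s at *
    obtain ⟨r, rfl⟩ : ∃ k, r = k + 1 := ⟨r - 1, by omega⟩
    obtain ⟨s, rfl⟩ : ∃ k, s = k + 1 := by
      refine ⟨s - 1, ?_⟩
      rcases Nat.eq_zero_or_pos s with rfl | h
      · omega
      · omega
    by_cases hA : β ≤ (2 * (s + 1) + 1) * r + (s + 1)
    · exact ⟨s + 1, r, hA, by omega⟩
    · refine ⟨s, r + 1 + 2, ?_, ?_⟩
      · nlinarith
      · rw [mul_add] at hsum; omega
  · push Not at hall
    obtain ⟨x, hx⟩ := hall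
    have hlt : ∑ y : Fin α, n i < ∑ y, n y :=
      Finset.sum_lt_sum (fun y _ => hi y) ⟨x, Finset.mem_univ x, lt_of_le_of_ne (hi x) (Ne.symm hx)⟩
    simp at hlt
    exact ⟨n i, r, hb', by omega⟩

/-! Optimisation -/

lemma sHat_spec (α β : ℕ) (hα : 3 ≤ α) : ∃ S : ℕ, sHat (α : ℤ) (β : ℝ) = S ∧
    4 * α * S ^ 2 ≤ 2 * β + α + 1 ∧ 2 * β + α + 1 < 4 * α * (S + 1) ^ 2 := by
  have ha : (0 : ℝ) < 4 * (α : ℝ) := by positivity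
  have h0 : 0 ≤ sHat (α : ℤ) (β : ℝ) := Int.floor_nonneg.2 (Real.sqrt_nonneg _)
  obtain ⟨S, hS⟩ := Int.eq_ofNat_of_zero_le h0
  refine ⟨S, hS, ?_⟩
  unfold sHat at hS
  rw [Int.floor_eq_iff] at hS
  push_cast at hS
  obtain ⟨h1, h2⟩ := hS
  rw [Real.le_sqrt (by positivity) (by positivity), le_div_iff₀ ha] at h1
  rw [Real.sqrt_lt' (by positivity), div_lt_iff₀ ha] at h2
  constructor
  · have : (4 * α * S ^ 2 : ℝ) ≤ 2 * β + α + 1 := by linarith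
    exact_mod_cast this
  · have : (2 * β + α + 1 : ℝ) < 4 * α * (S + 1) ^ 2 := by linarith
    exact_mod_cast this

lemma opt (α β S s : ℕ) (h1 : 4 * α * S ^ 2 ≤ 2 * β + α + 1)
    (h2 : 2 * β + α + 1 < 4 * α * (S + 1) ^ 2) :
    (α : ℝ) * S + (β + 1 / 2) / (2 * S + 1) ≤ α * s + (β + 1 / 2) / (2 * s + 1) := by
  have h1' : (4 * α * S ^ 2 : ℝ) ≤ 2 * β + α + 1 := by exact_mod_cast h1
  have h2' : (2 * β + α + 1 : ℝ) < 4 * α * (S + 1) ^ 2 := by exact_mod_cast h2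
  have hS : (0 : ℝ) < 2 * S + 1 := by positivity
  have hs : (0 : ℝ) < 2 * s + 1 := by positivity
  have ha : (0 : ℝ) ≤ α := by positivity
  have e : (α * s + (β + 1 / 2) / (2 * s + 1)) - ((α : ℝ) * S + (β + 1 / 2) / (2 * S + 1))
      = ((s : ℝ) - S) * (α * ((2 * s + 1) * (2 * S + 1)) - (2 * β + 1))
        / ((2 * s + 1) * (2 * S + 1)) := by
    field_simp; ring
  rw [← sub_nonneg, e]
  refine div_nonneg ?_ (by positivity)
  rcases lt_trichotomy s S with h | h | h
  · have h : (s : ℝ) + 1 ≤ S := by exact_mod_cast h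
    refine mul_nonneg_of_nonpos_of_nonpos (by linarith) ?_
    have : (α : ℝ) * ((2 * s + 1) * (2 * S + 1)) ≤ α * ((2 * S - 1) * (2 * S + 1)) := by
      gcongr; linarith
    nlinarith
  · simp [h]
  · have h : (S : ℝ) + 1 ≤ s := by exact_mod_cast h
    refine mul_nonneg (by linarith) ?_
    have : (α : ℝ) * ((2 * S + 3) * (2 * S + 1)) ≤ α * ((2 * s + 1) * (2 * S + 1)) :=
      mul_le_mul_of_nonneg_left (mul_le_mul_of_nonneg_right (by linarith) hS.le) ha
    nlinarith

end SpiderAux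

open SpiderAux in
/-- For all integers `α ≥ 3` and `β ≥ 1`, `th₊(T_{α,β}) = ⌈t_S(α,β)⌉`. -/
theorem stmt12 (α β : ℕ) (hα : 3 ≤ α) (hβ : 1 ≤ β) :
    (psdTh (balancedSpider α β) : ℤ) = ⌈tS (α : ℤ) (β : ℝ)⌉ := by
  obtain ⟨S, hS, h1, h2⟩ := sHat_spec α β hα
  have hSpos : (0 : ℝ) < 2 * S + 1 := by positivity
  have htS : tS (α : ℤ) (β : ℝ) = 1 + α * S + (β + 1 / 2) / (2 * S + 1) - 1 / 2 := by
    unfold tS; rw [hS]; push_cast; rfl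
  rw [htS]
  apply le_antisymm
  · set K := ⌈(1 + α * S + (β + 1 / 2) / (2 * S + 1) - 1 / 2 : ℝ)⌉ with hK
    have hle : (1 + α * S + (β + 1 / 2) / (2 * S + 1) - 1 / 2 : ℝ) ≤ K := Int.le_ceil _
    have hdpos : (0 : ℝ) < (β + 1 / 2) / (2 * S + 1) := by positivity
    have hpos : (α : ℤ) * S < K := by
      have : (α * S : ℝ) < K := by linarith
      exact_mod_cast this
    obtain ⟨r, hr⟩ := Int.eq_ofNat_of_zero_le (show 0 ≤ K - (1 + α * S) by omega)
    have hKr : K = 1 + α * S + r := by omega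
    rw [hKr] at hle ⊢
    push_cast at hle
    have h3 : (β + 1 / 2) / (2 * S + 1) ≤ (r + 1 / 2 : ℝ) := by linarith
    rw [div_le_iff₀ hSpos] at h3
    have h4 : (β : ℝ) ≤ (2 * S + 1) * r + S := by linarith
    have h5 : β ≤ (2 * S + 1) * r + S := by exact_mod_cast h4
    exact_mod_cast upper (α := α) S r h5
  · rw [Int.ceil_le]
    have hne : {k | ∃ B : Finset (SV α β), IsPSDForcing (balancedSpider α β) ↑B ∧
        k = B.card + psdPt (balancedSpider α β) ↑B}.Nonempty := by
      refine ⟨_, Finset.univ, ⟨0, ?_⟩, rfl⟩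
      simp
    obtain ⟨B, hB, hk⟩ := Nat.sInf_mem hne
    have hk : psdTh (balancedSpider α β) = B.card + psdPt (balancedSpider α β) ↑B := hk
    have hpt : (psdStep (balancedSpider α β))^[psdPt (balancedSpider α β) ↑B] ↑B = Set.univ :=
      Nat.sInf_mem hB
    rw [iter_univ_iff] at hpt
    obtain ⟨s, r, h3, h4⟩ := lower hα B _ hpt
    rw [← hk] at h4
    have h4' : (1 + α * s + r : ℝ) ≤ (psdTh (balancedSpider α β) : ℝ) := by exact_mod_cast h4
    have h3' : (β : ℝ) ≤ (2 * s + 1) * r + s := by exact_mod_cast h3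
    have h5 : (β + 1 / 2) / (2 * s + 1) ≤ (r + 1 / 2 : ℝ) := by
      rw [div_le_iff₀ (by positivity)]; linarith
    have h6 := opt α β S s h1 h2
    push_cast
    linarith
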